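/- If every 2-connected graph is τ-partitionable, then every graph is τ-partitionable. -/

import Mathlib

open SimpleGraph

/-- The detour order of a graph: the number of vertices in a longest path. -/
noncomputable def detourOrder {V : Type*} (G : SimpleGraph V) : ℕ :=
  sSup {n | ∃ (u v : V) (p : G.Walk u v), p.IsPath ∧ n = p.length + 1}

/-- A graph is 2-connected if it is connected, has at least 3 vertices, and
remains connected after deletion of any single vertex. -/
def TwoConnected {V : Type*} [Fintype V] (G : SimpleGraph V) : Prop :=
  G.Connected ∧ 3 ≤ Fintype.card V ∧
    ∀ v : V, (SimpleGraph.induce {w : V | w ≠ v} G).Connected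

/-- A graph `G` is τ-partitionable if for every pair `(a, b)` of positive
integers with `a + b = τ(G)` there is a partition `(A, B)` of the vertex set
such that the subgraph induced by `A` has detour order at most `a` and the
subgraph induced by `B` has detour order at most `b`. -/
def TauPartitionable {V : Type*} [Fintype V] [DecidableEq V]
    (G : SimpleGraph V) : Prop :=
  ∀ a b : ℕ, 0 < a → 0 < b → a + b = detourOrder G →
    ∃ A B : Finset V, Disjoint A B ∧ A ∪ B = Finset.univ ∧
      detourOrder (SimpleGraph.induce (A : Set V) G) ≤ a ∧
      detourOrder (SimpleGraph.induce (B : Set V) G) ≤ b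

/-!
The argument is by induction on induced subgraphs. A graph that is not 2-connected is small, or
disconnected (glue partitions of the two sides), or has a cut vertex `v` separating `D` from `X`.
In the last case let `d` and `x` be the lengths of the longest paths in `D` and in `X` starting at
a neighbour of `v`, say `x ≤ d`. Joining them through `v` gives `d + x + 1 ≤ a + b`. Take an
`(a, b)`-partition of `D ∪ {v}`, say with `v` in the first part `A ∪ {v}`, and one of `X` with
first part `C`; shrink `A` and `C` as far as the bound `b` on the complementary parts permits.
Then no vertex of `A` or `C` can be moved over, so each of them has a neighbour starting a path of
at least `b / 2` vertices in the complementary part. Hence a path in `A` starting next to `v` has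
at most `d - b / 2` vertices, one in `C` at most `x - b / 2`, and a path through `v` which enters
`C` has at most `d + x + 1 - b ≤ a` vertices.
-/

variable {V W : Type*} {G : SimpleGraph V} {H : SimpleGraph W} {s t A C D X Y : Set V}
  {l p q : List V} {v z : V} {a b d k n x : ℕ}

/-! ### Paths inside a set of vertices -/

/-- The list `l` is the vertex sequence of a path of `G` inside `s`. The empty list is allowed, so
that the pieces into which a vertex cuts a path are paths as well. -/
def IsPathIn (G : SimpleGraph V) (s : Set V) (l : List V) : Prop :=
  l.Nodup ∧ l.IsChain G.Adj ∧ ∀ y ∈ l, y ∈ s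

/-- The list `l` is an arm of `v` in `s`: a possibly empty path inside `s` whose first vertex is a
neighbour of `v`. -/
def IsArm (G : SimpleGraph V) (v : V) (s : Set V) (l : List V) : Prop :=
  IsPathIn G s l ∧ ∀ y ∈ l.head?, G.Adj v y

/-- No edge of `G` joins `s` to `t`. -/
def NoEdges (G : SimpleGraph V) (s t : Set V) : Prop :=
  ∀ y ∈ s, ∀ z ∈ t, ¬ G.Adj y z

theorem NoEdges.symm (h : NoEdges G s t) : NoEdges G t s :=
  fun y hy z hz hyz => h z hz y hy hyz.symm

theorem NoEdges.mono (h : NoEdges G s t) (hA : A ⊆ s) (hC : C ⊆ t) : NoEdges G A C :=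
  fun y hy z hz => h y (hA hy) z (hC hz)

theorem IsPathIn.mono (h : IsPathIn G s l) (hst : s ⊆ t) : IsPathIn G t l :=
  ⟨h.1, h.2.1, fun y hy => hst (h.2.2 y hy)⟩

theorem IsPathIn.reverse (h : IsPathIn G s l) : IsPathIn G s l.reverse := by
  refine ⟨List.nodup_reverse.2 h.1, List.isChain_reverse.2 ?_, by simpa using h.2.2⟩
  simpa only [G.adj_comm] using h.2.1

theorem isPathIn_append : IsPathIn G s (p ++ q) ↔
    IsPathIn G s p ∧ IsPathIn G s q ∧ p.Disjoint q ∧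
      ∀ y ∈ p.getLast?, ∀ z ∈ q.head?, G.Adj y z := by
  simp only [IsPathIn, List.nodup_append', List.isChain_append, List.mem_append, or_imp,
    forall_and]
  tauto

theorem isPathIn_cons : IsPathIn G s (v :: l) ↔ v ∈ s ∧ v ∉ l ∧ IsArm G v s l := by
  simp only [IsPathIn, IsArm, List.nodup_cons, List.isChain_cons, List.mem_cons, or_imp,
    forall_and, forall_eq]
  tauto

theorem isPathIn_map (f : H ↪g G) {s : Set W} {l : List W} :
    IsPathIn G (f '' s) (l.map f) ↔ IsPathIn H s l := by
  simp [IsPathIn, List.nodup_map_iff f.injective, List.isChain_map, f.map_adj_iff]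

theorem IsPathIn.of_insert (hl : IsPathIn G (insert v s) l) (hv : v ∉ l) : IsPathIn G s l :=
  ⟨hl.1, hl.2.1, fun y hy => (hl.2.2 y hy).resolve_left fun h => hv (h ▸ hy)⟩

theorem IsPathIn.of_noEdges (h : NoEdges G s t) (hl : IsPathIn G (s ∪ t) l) :
    IsPathIn G s l ∨ IsPathIn G t l := by
  induction l with
  | nil => simp [IsPathIn]
  | cons y l ih =>
    obtain ⟨hy, hyl, harm⟩ := isPathIn_cons.1 hl
    simp only [isPathIn_cons, IsArm]
    rcases l with - | ⟨z, l⟩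
    · simpa [IsPathIn] using hy
    · have hyz : G.Adj y z := harm.2 z rfl
      rcases ih harm.1 with hs | ht
      · have hz : z ∈ s := hs.2.2 z (by simp)
        exact .inl ⟨hy.resolve_right fun hy => h z hz y hy hyz.symm, hyl, hs, harm.2⟩
      · have hz : z ∈ t := ht.2.2 z (by simp)
        exact .inr ⟨hy.resolve_left fun hy => h y hy z hz hyz, hyl, ht, harm.2⟩

theorem isArm_nil : IsArm G v s [] := by
  simp [IsArm, IsPathIn]

theorem IsArm.mono (h : IsArm G v s l) (hst : s ⊆ t) : IsArm G v t l :=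
  ⟨h.1.mono hst, h.2⟩

theorem IsArm.of_noEdges (h : NoEdges G s t) (hl : IsArm G v (s ∪ t) l) :
    IsArm G v s l ∨ IsArm G v t l :=
  (hl.1.of_noEdges h).imp (⟨·, hl.2⟩) (⟨·, hl.2⟩)

theorem IsPathIn.disjoint (hp : IsPathIn G s p) (hq : IsPathIn G t q) (hst : Disjoint s t) :
    p.Disjoint q :=
  fun y hyp hyq => hst.notMem_of_mem_left (hp.2.2 y hyp) (hq.2.2 y hyq)

theorem IsArm.append (hp : IsArm G v s (p ++ [z])) (hq : IsArm G z t q) (hst : Disjoint s t) :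
    IsArm G v (s ∪ t) (p ++ [z] ++ q) := by
  refine ⟨isPathIn_append.2 ⟨hp.1.mono Set.subset_union_left, hq.1.mono Set.subset_union_right,
    hp.1.disjoint hq.1 hst, by simpa using hq.2⟩, ?_⟩
  rw [List.head?_append_of_ne_nil _ (by simp)]
  exact hp.2

theorem IsArm.isPathIn_insert (hp : IsArm G v s p) (hq : IsArm G v s q) (hpq : p.Disjoint q)
    (hv : v ∉ s) : IsPathIn G (insert v s) (p.reverse ++ v :: q) := by
  have hvp : v ∉ p := fun h => hv (hp.1.2.2 v h)
  have hvq : v ∉ q := fun h => hv (hq.1.2.2 v h)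
  have hs : s ⊆ insert v s := Set.subset_insert v s
  refine isPathIn_append.2 ⟨hp.1.reverse.mono hs,
    isPathIn_cons.2 ⟨Set.mem_insert v s, hvq, hq.mono hs⟩, ?_, ?_⟩
  · simpa [hvp] using hpq
  · simpa [G.adj_comm] using hp.2

theorem IsPathIn.exists_arms (hl : IsPathIn G (insert v s) l) (hv : v ∈ l) :
    ∃ p q, IsArm G v s p ∧ IsArm G v s q ∧ p.Disjoint q ∧
      l.length = p.length + q.length + 1 := by
  obtain ⟨p, q, rfl⟩ := List.append_of_mem hv
  obtain ⟨hp, hvq, hpq, hadj⟩ := isPathIn_append.1 hl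
  obtain ⟨-, hq, harm⟩ := isPathIn_cons.1 hvq
  simp only [List.disjoint_cons_right] at hpq
  refine ⟨p.reverse, q, ⟨(hp.of_insert hpq.1).reverse, ?_⟩, ⟨harm.1.of_insert hq, harm.2⟩,
    by simpa using hpq.2, by simp; ring⟩
  simpa [G.adj_comm] using hadj

/-! ### Bounds on paths and arms -/

/-- All paths of `G` inside `s` have at most `n` vertices, that is, the subgraph induced by `s`
has detour order at most `n`. -/
def PathBounded (G : SimpleGraph V) (s : Set V) (n : ℕ) : Prop :=
  ∀ l, IsPathIn G s l → l.length ≤ n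

/-- All arms of `v` in `s` have at most `n` vertices. -/
def ArmBounded (G : SimpleGraph V) (v : V) (s : Set V) (n : ℕ) : Prop :=
  ∀ l, IsArm G v s l → l.length ≤ n

theorem PathBounded.anti (h : PathBounded G t n) (hst : s ⊆ t) : PathBounded G s n :=
  fun l hl => h l (hl.mono hst)

theorem PathBounded.mono (h : PathBounded G s k) (hkn : k ≤ n) : PathBounded G s n :=
  fun l hl => (h l hl).trans hkn

theorem pathBounded_of_ncard_le [Finite V] (h : s.ncard ≤ n) : PathBounded G s n := by
  classical
  intro l hl
  rw [← List.toFinset_card_of_nodup hl.1, ← Set.ncard_coe_finset]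
  exact (Set.ncard_le_ncard fun y hy => hl.2.2 y (by simpa using hy)).trans h

theorem PathBounded.union (h : NoEdges G s t) (hs : PathBounded G s n)
    (ht : PathBounded G t n) : PathBounded G (s ∪ t) n :=
  fun l hl => (hl.of_noEdges h).elim (hs l) (ht l)

theorem pathBounded_image_iff (f : H ↪g G) {s : Set W} :
    PathBounded G (f '' s) n ↔ PathBounded H s n := by
  refine ⟨fun h l hl => by simpa using h _ ((isPathIn_map f).2 hl), fun h l hl => ?_⟩
  obtain ⟨l, rfl⟩ : l ∈ Set.range (List.map f) := by
    rw [Set.range_list_map]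
    exact fun y hy => Set.image_subset_range f s (hl.2.2 y hy)
  simpa using h l ((isPathIn_map f).1 hl)

theorem pathBounded_insert_iff (hv : v ∉ s) : PathBounded G (insert v s) n ↔
    PathBounded G s n ∧ ∀ p q, IsArm G v s p → IsArm G v s q → p.Disjoint q →
      p.length + q.length + 1 ≤ n := by
  refine ⟨fun h => ⟨h.anti (Set.subset_insert v s), fun p q hp hq hpq => ?_⟩,
    fun ⟨hs, harms⟩ l hl => ?_⟩
  · have := h _ (hp.isPathIn_insert hq hpq hv)
    simp only [List.length_append, List.length_reverse, List.length_cons] at this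
    omega
  · by_cases hvl : v ∈ l
    · obtain ⟨p, q, hp, hq, hpq, hlen⟩ := hl.exists_arms hvl
      exact hlen.trans_le (harms p q hp hq hpq)
    · exact hs l (hl.of_insert hvl)

theorem PathBounded.exists_longest_arm (h : PathBounded G s n) (v : V) :
    ∃ q, IsArm G v s q ∧ ArmBounded G v s q.length := by
  obtain ⟨_, ⟨q, hq, rfl⟩, hmax⟩ :=
    BddAbove.exists_isGreatest_of_nonempty (S := List.length '' {q | IsArm G v s q})
      ⟨n, Set.forall_mem_image.2 fun q hq => h q hq.1⟩ ⟨0, [], isArm_nil, rfl⟩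
  exact ⟨q, hq, fun l hl => hmax ⟨l, hl, rfl⟩⟩

theorem PathBounded.exists_armBounded (h : PathBounded G (insert v (D ∪ X)) n)
    (hdisj : Disjoint D X) (hv : v ∉ D ∪ X) :
    ∃ d x, ArmBounded G v D d ∧ ArmBounded G v X x ∧ d + x + 1 ≤ n := by
  obtain ⟨hDX, harms⟩ := (pathBounded_insert_iff hv).1 h
  obtain ⟨p, hp, hpmax⟩ := (hDX.anti Set.subset_union_left).exists_longest_arm v
  obtain ⟨q, hq, hqmax⟩ := (hDX.anti Set.subset_union_right).exists_longest_arm v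
  exact ⟨p.length, q.length, hpmax, hqmax, harms p q (hp.mono Set.subset_union_left)
    (hq.mono Set.subset_union_right) (hp.1.disjoint hq.1 hdisj)⟩

theorem PathBounded.exists_long_arm (hs : PathBounded G s n) (hv : v ∉ s)
    (hvs : ¬ PathBounded G (insert v s) n) : ∃ q, IsArm G v s q ∧ n ≤ 2 * q.length := by
  rw [pathBounded_insert_iff hv] at hvs
  push Not at hvs
  obtain ⟨p, q, hp, hq, -, hlen⟩ := hvs hs
  rcases le_total p.length q.length with hpq | hpq
  · exact ⟨q, hq, by omega⟩
  · exact ⟨p, hp, by omega⟩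

/-! ### Shrinking one part of a partition -/

theorem subset_of_minimal_pathBounded_sdiff (hA : Minimal (fun A => PathBounded G (Y \ A) n) A) :
    A ⊆ Y :=
  (hA.2 (y := A ∩ Y) (by simpa using hA.1) Set.inter_subset_left).trans Set.inter_subset_right

theorem ArmBounded.two_mul_length_add_le (hd : ArmBounded G v Y d)
    (hA : Minimal (fun A => PathBounded G (Y \ A) n) A) (hp : IsArm G v A p) (hne : p ≠ []) :
    2 * p.length + n ≤ 2 * d := by
  obtain ⟨r, z, rfl⟩ := (List.eq_nil_or_concat' p).resolve_left hne
  have hzA : z ∈ A := hp.1.2.2 z (by simp)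
  have hAY : A ⊆ Y := subset_of_minimal_pathBounded_sdiff hA
  have hz : ¬ PathBounded G (insert z (Y \ A)) n := fun h =>
    (hA.2 (y := A \ {z}) (h.anti (by grind)) Set.sdiff_subset hzA).2 rfl
  obtain ⟨m, hm, hnm⟩ := hA.prop.exists_long_arm (fun h => h.2 hzA) hz
  have hrm : (r ++ [z] ++ m).length ≤ d :=
    hd _ ((hp.append hm Set.disjoint_sdiff_right).mono (by grind))
  simp only [List.length_append] at hrm ⊢
  omega

theorem PathBounded.insert_union_of_minimal (h : NoEdges G A C) (hvA : v ∉ A) (hvC : v ∉ C)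
    (hd : ArmBounded G v D d) (hx : ArmBounded G v X x) (hxd : x ≤ d) (hab : d + x + 1 ≤ a + b)
    (hAmin : Minimal (fun A => PathBounded G (D \ A) b) A)
    (hCmin : Minimal (fun C => PathBounded G (X \ C) b) C)
    (hvAa : PathBounded G (insert v A) a) (hCa : PathBounded G C a) :
    PathBounded G (insert v (A ∪ C)) a := by
  obtain ⟨hAa, hjoinA⟩ := (pathBounded_insert_iff hvA).1 hvAa
  have harm (r : List V) (hr : IsArm G v (A ∪ C) r) :
      IsArm G v A r ∨ 2 * r.length + b ≤ 2 * x := by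
    rcases eq_or_ne r [] with rfl | hne
    · exact .inl isArm_nil
    · exact (hr.of_noEdges h).imp_right fun hr => hx.two_mul_length_add_le hCmin hr hne
  have hjoin (p q : List V) (hp : 2 * p.length + b ≤ 2 * x) (hq : IsArm G v (A ∪ C) q) :
      p.length + q.length + 1 ≤ a := by
    have hqd : 2 * q.length + b ≤ 2 * d := by
      rcases eq_or_ne q [] with rfl | hne
      · simp only [List.length_nil]
        omega
      rcases harm q hq with hqA | hqx
      · exact hd.two_mul_length_add_le hAmin hqA hne
      · omega
    omega
  refine (pathBounded_insert_iff (by simp [hvA, hvC])).2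
    ⟨hAa.union h hCa, fun p q hp hq hpq => ?_⟩
  rcases harm p hp with hpA | hpx
  · rcases harm q hq with hqA | hqx
    · exact hjoinA p q hpA hqA hpq
    · exact add_comm p.length q.length ▸ hjoin q p hqx hp
  · exact hjoin p q hpx hq

/-! ### Partitions -/

/-- The subgraph of `G` induced by `s` has an `(a, b)`-partition, namely `(A, s \ A)`. -/
def HasPathPartition (G : SimpleGraph V) (s : Set V) (a b : ℕ) : Prop :=
  ∃ A ⊆ s, PathBounded G A a ∧ PathBounded G (s \ A) b

/-- The subgraph of `G` induced by `s` is τ-partitionable. Here `a + b` may exceed the detour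
order, which makes the notion usable for subgraphs of smaller detour order. -/
def PathPartitionable (G : SimpleGraph V) (s : Set V) : Prop :=
  ∀ a b, 0 < a → 0 < b → PathBounded G s (a + b) → HasPathPartition G s a b

theorem HasPathPartition.symm (h : HasPathPartition G s a b) : HasPathPartition G s b a := by
  obtain ⟨A, hA, hAa, hAb⟩ := h
  exact ⟨s \ A, Set.sdiff_subset, hAb, by rwa [Set.sdiff_sdiff_cancel_left hA]⟩

theorem hasPathPartition_image_iff (f : H ↪g G) {s : Set W} :
    HasPathPartition G (f '' s) a b ↔ HasPathPartition H s a b := by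
  simp only [HasPathPartition, Set.exists_subset_image_iff, ← Set.image_sdiff f.injective,
    pathBounded_image_iff]

theorem pathPartitionable_image_iff (f : H ↪g G) {s : Set W} :
    PathPartitionable G (f '' s) ↔ PathPartitionable H s := by
  simp only [PathPartitionable, pathBounded_image_iff, hasPathPartition_image_iff]

theorem pathPartitionable_of_ncard_le_two [Finite V] (hs : s.ncard ≤ 2) :
    PathPartitionable G s := by
  intro a b ha hb _
  obtain ⟨A, hA, hcard⟩ := Set.exists_subset_card_eq (min_le_left s.ncard 1)
  refine ⟨A, hA, pathBounded_of_ncard_le (by omega), pathBounded_of_ncard_le ?_⟩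
  rw [Set.ncard_sdiff hA]
  omega

theorem HasPathPartition.union (h : NoEdges G s t) (hs : HasPathPartition G s a b)
    (ht : HasPathPartition G t a b) : HasPathPartition G (s ∪ t) a b := by
  obtain ⟨A, hA, hAa, hAb⟩ := hs
  obtain ⟨C, hC, hCa, hCb⟩ := ht
  exact ⟨A ∪ C, Set.union_subset_union hA hC, hAa.union (h.mono hA hC) hCa,
    (hAb.union (h.mono Set.sdiff_subset Set.sdiff_subset) hCb).anti (by grind)⟩

theorem HasPathPartition.insert_union_of_pathBounded [Finite V] (h : NoEdges G D X) (hvD : v ∉ D)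
    (hvX : v ∉ X) (hd : ArmBounded G v D d) (hx : ArmBounded G v X x) (hxd : x ≤ d)
    (hab : d + x + 1 ≤ a + b) (hAa : PathBounded G (insert v A) a)
    (hAb : PathBounded G (D \ A) b) (hX : HasPathPartition G X a b) :
    HasPathPartition G (insert v (D ∪ X)) a b := by
  obtain ⟨C, -, hCa, hCb⟩ := hX
  obtain ⟨A', hA', hAmin⟩ :=
    exists_minimal_le_of_wellFoundedLT (fun A => PathBounded G (D \ A) b) A hAb
  obtain ⟨C', hC', hCmin⟩ :=
    exists_minimal_le_of_wellFoundedLT (fun C => PathBounded G (X \ C) b) C hCb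
  have hA'D : A' ⊆ D := subset_of_minimal_pathBounded_sdiff hAmin
  have hC'X : C' ⊆ X := subset_of_minimal_pathBounded_sdiff hCmin
  refine ⟨insert v (A' ∪ C'), Set.insert_subset_insert (Set.union_subset_union hA'D hC'X),
    .insert_union_of_minimal (h.mono hA'D hC'X) (fun hv => hvD (hA'D hv)) (fun hv => hvX (hC'X hv))
      hd hx hxd hab hAmin hCmin (hAa.anti (Set.insert_subset_insert hA')) (hCa.anti hC'), ?_⟩
  exact (hAmin.prop.union (h.mono Set.sdiff_subset Set.sdiff_subset) hCmin.prop).anti (by grind)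

theorem HasPathPartition.insert_union [Finite V] (h : NoEdges G D X) (hvD : v ∉ D) (hvX : v ∉ X)
    (hd : ArmBounded G v D d) (hx : ArmBounded G v X x) (hxd : x ≤ d) (hab : d + x + 1 ≤ a + b)
    (hD : HasPathPartition G (insert v D) a b) (hX : HasPathPartition G X a b) :
    HasPathPartition G (insert v (D ∪ X)) a b := by
  obtain ⟨A, -, hAa, hAb⟩ := hD
  by_cases hv : v ∈ A
  · exact .insert_union_of_pathBounded h hvD hvX hd hx hxd hab (A := A \ {v})
      (hAa.anti (by grind)) (hAb.anti (by grind)) hX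
  · exact (insert_union_of_pathBounded h hvD hvX hd hx hxd (add_comm a b ▸ hab) (A := D \ A)
      (hAb.anti (by grind)) (hAa.anti (by grind)) hX.symm).symm

/-! ### Separations -/

/-- The pair `(D, X)` separates the subgraph of `G` induced by `s`: it is a partition of `s` into
nonempty parts with no edge between them. -/
structure IsSeparation (G : SimpleGraph V) (s D X : Set V) : Prop where
  nonempty_left : D.Nonempty
  nonempty_right : X.Nonempty
  disjoint : Disjoint D X
  union_eq : D ∪ X = s
  noEdges : NoEdges G D X

theorem IsSeparation.symm (h : IsSeparation G s D X) : IsSeparation G s X D :=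
  ⟨h.nonempty_right, h.nonempty_left, h.disjoint.symm, Set.union_comm X D ▸ h.union_eq,
    h.noEdges.symm⟩

theorem IsSeparation.left_ssubset (h : IsSeparation G s D X) : D ⊂ s := by
  obtain ⟨y, hy⟩ := h.nonempty_right
  rw [← h.union_eq]
  exact (Set.ssubset_iff_of_subset Set.subset_union_left).2
    ⟨y, .inr hy, h.disjoint.notMem_of_mem_right hy⟩

theorem IsSeparation.right_ssubset (h : IsSeparation G s D X) : X ⊂ s :=
  h.symm.left_ssubset

theorem exists_isSeparation_of_not_connected (hs : s.Nonempty) (h : ¬ (G.induce s).Connected) :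
    ∃ D X, IsSeparation G s D X := by
  obtain ⟨y, hy⟩ := hs
  rw [connected_iff_exists_forall_reachable] at h
  push Not at h
  obtain ⟨z, hyz⟩ := h ⟨y, hy⟩
  let R : Set s := {w | (G.induce s).Reachable ⟨y, hy⟩ w}
  refine ⟨(↑) '' R, (↑) '' Rᶜ, ⟨_, ⟨y, hy⟩, .refl _, rfl⟩, ⟨_, z, hyz, rfl⟩, ?_, ?_, ?_⟩
  · exact (Set.disjoint_image_iff Subtype.val_injective).2 disjoint_compl_right
  · rw [← Set.image_union, Set.union_compl_self, Set.image_univ, Subtype.range_coe]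
  · rintro _ ⟨u, hu, rfl⟩ _ ⟨w, hw, rfl⟩ huw
    exact hw (hu.trans (Adj.reachable (G := G.induce s) huw))

theorem exists_isSeparation_of_not_twoConnected [Fintype V] (hV : 3 ≤ Fintype.card V)
    (h : ¬ TwoConnected G) :
    ∃ D X, IsSeparation G Set.univ D X ∨ ∃ v, IsSeparation G {v}ᶜ D X := by
  have : Nontrivial V := Fintype.one_lt_card_iff_nontrivial.1 (by omega)
  by_cases hG : G.Connected
  · obtain ⟨v, hv⟩ : ∃ v, ¬ (G.induce {w | w ≠ v}).Connected := by
      by_contra! hcon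
      exact h ⟨hG, hV, hcon⟩
    obtain ⟨D, X, hDX⟩ := exists_isSeparation_of_not_connected (exists_ne v) hv
    exact ⟨D, X, .inr ⟨v, hDX⟩⟩
  · rw [← (induceUnivIso G).connected_iff] at hG
    obtain ⟨D, X, hDX⟩ := exists_isSeparation_of_not_connected Set.univ_nonempty hG
    exact ⟨D, X, .inl hDX⟩

theorem IsSeparation.pathPartitionable (h : IsSeparation G s D X)
    (ih : ∀ t ⊂ s, PathPartitionable G t) : PathPartitionable G s := by
  have hD := ih D h.left_ssubset
  have hX := ih X h.right_ssubset
  obtain rfl := h.union_eq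
  exact fun a b ha hb hab => .union h.noEdges (hD a b ha hb (hab.anti Set.subset_union_left))
    (hX a b ha hb (hab.anti Set.subset_union_right))

theorem IsSeparation.pathPartitionable_insert [Finite V] (h : IsSeparation G s D X) (hv : v ∉ s)
    (ih : ∀ t ⊂ insert v s, PathPartitionable G t) : PathPartitionable G (insert v s) := by
  intro a b ha hb hab
  have part (t) (ht : t ⊂ insert v s) : HasPathPartition G t a b :=
    ih t ht a b ha hb (hab.anti ht.subset)
  have hD : D ⊂ insert v s := h.left_ssubset.trans_subset (Set.subset_insert v s)
  have hX : X ⊂ insert v s := h.right_ssubset.trans_subset (Set.subset_insert v s)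
  have hvD : insert v D ⊂ insert v s := by grind [h.left_ssubset]
  have hvX : insert v X ⊂ insert v s := by grind [h.right_ssubset]
  obtain rfl := h.union_eq
  obtain ⟨d, x, hd, hx, hdx⟩ := hab.exists_armBounded h.disjoint hv
  rw [Set.mem_union, not_or] at hv
  rcases le_total x d with hxd | hxd
  · exact .insert_union h.noEdges hv.1 hv.2 hd hx hxd hdx (part _ hvD) (part X hX)
  · rw [Set.union_comm]
    exact .insert_union h.noEdges.symm hv.2 hv.1 hx hd hxd (by omega) (part _ hvX) (part D hD)

theorem pathPartitionable_univ_of_not_twoConnected [Fintype V] (h : ¬ TwoConnected G)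
    (ih : ∀ s ⊂ Set.univ, PathPartitionable G s) : PathPartitionable G Set.univ := by
  rcases le_or_gt (Fintype.card V) 2 with hV | hV
  · exact pathPartitionable_of_ncard_le_two (by simpa [Set.ncard_univ] using hV)
  obtain ⟨D, X, hDX | ⟨v, hDX⟩⟩ := exists_isSeparation_of_not_twoConnected hV h
  · exact hDX.pathPartitionable ih
  · have hv : insert v {v}ᶜ = Set.univ := by simp [Set.insert_eq]
    rw [← hv] at ih ⊢
    exact hDX.pathPartitionable_insert (by simp) ih

/-! ### Detour order -/

theorem detourOrder_le_iff [Finite V] : detourOrder G ≤ n ↔ PathBounded G Set.univ n := by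
  have := Fintype.ofFinite V
  constructor
  · rintro h l ⟨hnodup, hchain, -⟩
    rcases eq_or_ne l [] with rfl | hne
    · simp
    have hpath : (Walk.ofSupport l hne hchain).IsPath := by
      rwa [Walk.isPath_def, Walk.support_ofSupport]
    have hbdd : BddAbove {n | ∃ (u v : V) (p : G.Walk u v), p.IsPath ∧ n = p.length + 1} := by
      refine ⟨Fintype.card V, ?_⟩
      rintro _ ⟨u, v, p, hp, rfl⟩
      exact hp.length_lt
    have hle := (le_csSup hbdd ⟨_, _, _, hpath, rfl⟩).trans h
    rw [Walk.length_ofSupport] at hle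
    omega
  · refine fun h => csSup_le' ?_
    rintro _ ⟨u, v, p, hp, rfl⟩
    simpa using h p.support ⟨hp.support_nodup, p.isChain_adj_support, by simp⟩

theorem image_univ_induce (G : SimpleGraph V) (s : Set V) :
    Embedding.induce (G := G) s '' Set.univ = s := by
  rw [Set.image_univ]
  exact Subtype.range_coe

theorem detourOrder_induce_le_iff [Finite V] :
    detourOrder (G.induce s) ≤ n ↔ PathBounded G s n := by
  rw [detourOrder_le_iff, ← pathBounded_image_iff (Embedding.induce s), image_univ_induce]

theorem tauPartitionable_iff [Fintype V] [DecidableEq V] :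
    TauPartitionable G ↔ PathPartitionable G Set.univ := by
  simp only [TauPartitionable, detourOrder_induce_le_iff]
  constructor
  · intro h a b ha _ hab
    by_cases hGa : PathBounded G Set.univ a
    · exact ⟨Set.univ, subset_rfl, hGa, pathBounded_of_ncard_le (by simp)⟩
    rw [← detourOrder_le_iff] at hGa hab
    obtain ⟨A, B, -, hAB, hA, hB⟩ := h a (detourOrder G - a) ha (by omega) (by omega)
    refine ⟨A, Set.subset_univ _, hA, (hB.mono (by omega)).anti fun y hy => ?_⟩
    have := hAB ▸ Finset.mem_univ y
    grind
  · intro h a b ha hb hab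
    obtain ⟨A, -, hA, hB⟩ := h a b ha hb (detourOrder_le_iff.1 hab.ge)
    classical
    exact ⟨A.toFinset, A.toFinsetᶜ, disjoint_compl_right, Finset.union_compl _, by simpa using hA,
      by simpa [Set.compl_eq_univ_sdiff] using hB⟩

theorem pathPartitionable_of_forall_twoConnected [Finite V]
    (h : ∀ (s : Set V) [Fintype s], TwoConnected (G.induce s) → PathPartitionable G s)
    (s : Set V) : PathPartitionable G s := by
  induction s using WellFoundedLT.induction with
  | ind s ih =>
    have := Fintype.ofFinite s
    by_cases h2 : TwoConnected (G.induce s)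
    · exact h s h2
    rw [← image_univ_induce G s, pathPartitionable_image_iff]
    refine pathPartitionable_univ_of_not_twoConnected h2 fun t ht => ?_
    rw [← pathPartitionable_image_iff (Embedding.induce s)]
    exact ih _ (((Embedding.induce s).injective.image_strictMono ht).trans_eq
      (image_univ_induce G s))

theorem tauPartitionable_of_twoConnected_tauPartitionable_general {V : Type*} [Fintype V]
    [DecidableEq V] {G : SimpleGraph V}
    (h : ∀ (s : Set V) [Fintype s] [DecidableEq s],
      TwoConnected (G.induce s) → TauPartitionable (G.induce s)) :
    TauPartitionable G := by
  refine tauPartitionable_iff.2 (pathPartitionable_of_forall_twoConnected (fun s _ hs => ?_) _)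
  rw [← image_univ_induce G s, pathPartitionable_image_iff]
  exact tauPartitionable_iff.1 (h s hs)

/-- If every 2-connected graph is τ-partitionable, then every graph is
τ-partitionable. -/
theorem tauPartitionable_of_twoConnected_tauPartitionable
    (h : ∀ (V : Type) [Fintype V] [DecidableEq V] (G : SimpleGraph V),
      TwoConnected G → TauPartitionable G) :
    ∀ (V : Type) [Fintype V] [DecidableEq V] (G : SimpleGraph V),
      TauPartitionable G :=
  fun _ _ _ _ => tauPartitionable_of_twoConnected_tauPartitionable_general fun _ _ _ => h _ _
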